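/- Let q be a prime power, n an even positive integer, and K a finite field with q^n elements. Let ψ be the automorphism of the abelian group Kˣ given by ψ(λ) = λ^{−q} (the composite of inversion and the q-power Frobenius), and form the semidirect product Γ = Kˣ ⋊ ℤ/nℤ in which the generator 1 of ℤ/nℤ acts as ψ (this is well defined since ψ^n is the identity). If an element (λ, j) ∈ Γ has prime order r and r divides n, then λ is an ((−q)^{n/r} − 1)-th power in Kˣ, i.e., there exists μ ∈ Kˣ with λ = μ^{(−q)^{n/r} − 1} (an integer power of μ). -/

import Mathlib

/-!
Write `Q = -q`, `b = Q ^ (n / r)` and `S = 1 + b + ⋯ + b ^ (r - 1)`. As `n` is even, the cyclic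
group `Kˣ` has order `Q ^ n - 1 = (b - 1) * S`, so an element `λ` is a `(b - 1)`-th power as soon as
`λ ^ S = 1` (`exists_zpow_eq_of_zpow_eq_one`).

Let `y = (λ, j)` with `y ^ r = 1`. Then `r * j = 0` in `ℤ/nℤ`, so `j = c * (n / r)` with
`0 ≤ c < r`, and the first coordinate of `y ^ r` is the product of the `λ ^ (b ^ (c * t))` over
`t < r`, which is therefore `1`.
* If `c ≠ 0`, multiplication by `c` permutes the residues modulo `r`, and `λ ^ (b ^ m)` depends only
  on `m` modulo `r`, so the product is `λ ^ S`.
* If `c = 0`, then `λ` has order `r`, whence `r ∣ b ^ r - 1`. By Fermat `b ≡ 1` modulo `r`, so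
  `S ≡ r ≡ 0` modulo `r`, and again `λ ^ S = 1`.
-/

theorem exists_zpow_eq_of_zpow_eq_one {G : Type*} [Group G] [IsCyclic G] (d S : ℤ)
    (hS : S ≠ 0) (hcard : (Nat.card G : ℤ) = d * S) (x : G) (hx : x ^ S = 1) :
    ∃ μ : G, x = μ ^ d := by
  obtain ⟨g, hg⟩ := IsCyclic.exists_generator (α := G)
  obtain ⟨m, rfl⟩ := Subgroup.mem_zpowers_iff.1 (hg x)
  rw [← zpow_mul, ← orderOf_dvd_iff_zpow_eq_one, orderOf_eq_card_of_forall_mem_zpowers hg,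
    hcard] at hx
  obtain ⟨k, rfl⟩ := Int.dvd_of_mul_dvd_mul_right hS hx
  exact ⟨g ^ k, by rw [← zpow_mul, mul_comm]⟩

theorem semidirect_pow_left {N H : Type*} [CommGroup N] [Group H] (φ : H →* MulAut N)
    (y : N ⋊[φ] H) (i : ℕ) :
    (y ^ i).left = ∏ t ∈ Finset.range i, φ (y.right ^ t) y.left := by
  induction i with
  | zero => simp
  | succ i ih =>
    have hr : (y ^ i).right = y.right ^ i := map_pow SemidirectProduct.rightHom y i
    rw [pow_succ, SemidirectProduct.mul_left, ih, Finset.prod_range_succ, hr]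

theorem ofAdd_one_pow_apply {N : Type*} [CommGroup N] {n : ℕ} (Q : ℤ)
    (φ : Multiplicative (ZMod n) →* MulAut N)
    (hφ : ∀ l, φ (Multiplicative.ofAdd 1) l = l ^ Q) (k : ℕ) (l : N) :
    φ (Multiplicative.ofAdd 1 ^ k) l = l ^ (Q ^ k) := by
  induction k with
  | zero => simp
  | succ k ih => rw [pow_succ', map_mul, MulAut.mul_apply, ih, hφ, ← zpow_mul, pow_succ]

theorem image_mul_mod_range {r c : ℕ} (hr : 0 < r) (hc : Nat.Coprime r c) :
    Set.InjOn (fun t => c * t % r) (Finset.range r : Set ℕ) ∧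
      (Finset.range r).image (fun t => c * t % r) = Finset.range r := by
  have hinj : Set.InjOn (fun t => c * t % r) (Finset.range r : Set ℕ) := by
    intro s hs t ht h
    have h' : s ≡ t [MOD r] := Nat.ModEq.cancel_left_of_coprime hc h
    exact h'.eq_of_lt_of_lt (by simpa using hs) (by simpa using ht)
  refine ⟨hinj, Finset.eq_of_subset_of_card_le ?_ ?_⟩
  · intro x hx
    obtain ⟨t, -, rfl⟩ := Finset.mem_image.1 hx
    exact Finset.mem_range.2 (Nat.mod_lt _ hr)
  · rw [Finset.card_image_of_injOn hinj]

/-- If `x ^ (b ^ r) = x`, then `x ^ (b ^ m)` depends only on the residue of `m` modulo `r`. -/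
theorem zpow_pow_mod {G : Type*} [Group G] (x : G) (b : ℤ) (r : ℕ) (h : x ^ (b ^ r) = x) (m : ℕ) :
    x ^ (b ^ m) = x ^ (b ^ (m % r)) := by
  have key (k : ℕ) : x ^ ((b ^ r) ^ k) = x := by
    induction k with
    | zero => simp
    | succ k ih => rw [pow_succ, zpow_mul, ih, h]
  conv_lhs => rw [← Nat.div_add_mod m r, pow_add, pow_mul, zpow_mul, key]

theorem dvd_geom_sum_of_prime {r : ℕ} (hr : r.Prime) (b : ℤ) (h : (r : ℤ) ∣ b ^ r - 1) :
    (r : ℤ) ∣ ∑ i ∈ Finset.range r, b ^ i := by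
  have : Fact r.Prime := ⟨hr⟩
  rw [← ZMod.intCast_zmod_eq_zero_iff_dvd] at h ⊢
  push_cast at h ⊢
  rw [ZMod.pow_card, sub_eq_zero] at h
  simp [h]

theorem unitary_singer_prime_order_form (q n : ℕ) (hq : IsPrimePow q) (hn : Even n)
    (hn0 : 0 < n) (K : Type*) [Field K] [Fintype K] (hK : Fintype.card K = q ^ n)
    (φ : Multiplicative (ZMod n) →* MulAut Kˣ)
    (hφ : ∀ l : Kˣ, φ (Multiplicative.ofAdd 1) l = l ^ (-(q : ℤ)))
    (y : Kˣ ⋊[φ] Multiplicative (ZMod n)) (r : ℕ) (hr : r.Prime)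
    (hy : orderOf y = r) (hrn : r ∣ n) :
    ∃ μ : Kˣ, y.left = μ ^ ((-(q : ℤ)) ^ (n / r) - 1) := by
  have : NeZero n := ⟨hn0.ne'⟩
  obtain ⟨m, rfl⟩ := hrn
  rw [Nat.mul_div_cancel_left _ hr.pos]
  have hm : 0 < m := Nat.pos_of_mul_pos_left hn0
  set b : ℤ := (-(q : ℤ)) ^ m with hb
  have hbr : b ^ r = (q : ℤ) ^ (r * m) := by rw [hb, ← pow_mul, mul_comm m r, hn.neg_pow]
  have hcard : (Nat.card Kˣ : ℤ) = b ^ r - 1 := by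
    rw [hbr, Nat.card_units, Nat.card_eq_fintype_card, hK,
      Nat.cast_sub (Nat.one_le_pow _ _ hq.pos)]
    push_cast
    rfl
  have hcard' : (Nat.card Kˣ : ℤ) = (b - 1) * ∑ i ∈ Finset.range r, b ^ i := by
    rw [hcard, mul_geom_sum]
  have hS : ∑ i ∈ Finset.range r, b ^ i ≠ 0 := by
    intro h0
    rw [h0, mul_zero] at hcard'
    exact Nat.card_pos.ne' (by exact_mod_cast hcard')
  refine exists_zpow_eq_of_zpow_eq_one _ _ hS hcard' _ ?_
  have hpow : y ^ r = 1 := orderOf_dvd_iff_pow_eq_one.1 hy.dvd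
  set k : ℕ := (Multiplicative.toAdd y.right).val with hk
  have hyk : y.right = Multiplicative.ofAdd (1 : ZMod (r * m)) ^ k := by
    rw [← ofAdd_nsmul, nsmul_one, hk, ZMod.natCast_zmod_val, ofAdd_toAdd]
  have hright : y.right ^ r = 1 := by
    have h := congrArg SemidirectProduct.rightHom hpow
    rwa [map_pow, map_one] at h
  have hdvd : m ∣ k := by
    rw [hyk, ← pow_mul, ← ofAdd_nsmul, nsmul_one, ofAdd_eq_one, ZMod.natCast_eq_zero_iff,
      mul_comm k] at hright
    exact Nat.dvd_of_mul_dvd_mul_left hr.pos hright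
  obtain ⟨c, hc⟩ := hdvd
  have hcr : c < r := by
    have h : k < r * m := ZMod.val_lt _
    rw [hc, mul_comm r] at h
    exact Nat.lt_of_mul_lt_mul_left h
  have hprod : ∏ t ∈ Finset.range r, y.left ^ (b ^ (c * t)) = 1 := by
    have h := semidirect_pow_left φ y r
    rw [hpow, SemidirectProduct.one_left] at h
    rw [h]
    refine Finset.prod_congr rfl fun t _ => ?_
    rw [hyk, ← pow_mul (Multiplicative.ofAdd _), ofAdd_one_pow_apply _ φ hφ, hc, hb, ← pow_mul,
      mul_assoc]
  rcases Nat.eq_zero_or_pos c with rfl | hc0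
  · have hlr : y.left ^ r = 1 := by simpa using hprod
    have hl1 : y.left ≠ 1 := by
      intro h1
      have : y = 1 := SemidirectProduct.ext h1 (by rw [hyk, hc]; simp)
      rw [this, orderOf_one] at hy
      exact hr.one_lt.ne hy
    have : Fact r.Prime := ⟨hr⟩
    have hord : orderOf y.left = r := orderOf_eq_prime hlr hl1
    rw [← orderOf_dvd_iff_zpow_eq_one, hord]
    refine dvd_geom_sum_of_prime hr b ?_
    rw [← hcard, ← hord]
    exact_mod_cast orderOf_dvd_natCard y.left
  · have hcop : Nat.Coprime r c := Nat.coprime_of_lt_prime hc0.ne' hcr hr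
    have hper : y.left ^ (b ^ r) = y.left := by
      have : b ^ r = 1 + Nat.card Kˣ := by rw [hcard]; ring
      rw [this, zpow_add, zpow_natCast, pow_card_eq_one', mul_one, zpow_one]
    obtain ⟨hinj, himg⟩ := image_mul_mod_range hr.pos hcop
    have hsum : y.left ^ (∑ i ∈ Finset.range r, b ^ i)
        = ∏ i ∈ Finset.range r, y.left ^ (b ^ i) := by
      induction Finset.range r using Finset.induction_on with
      | empty => simp
      | insert a s ha ih => rw [Finset.sum_insert ha, Finset.prod_insert ha, zpow_add, ih]
    rw [hsum, ← himg, Finset.prod_image hinj, ← hprod]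
    exact Finset.prod_congr rfl fun t _ => (zpow_pow_mod _ b r hper _).symm
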